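/- Let ABCD be a bicentric quadrilateral in the Euclidean plane: dist E A = dist E B = dist E C = dist E D = r > 0 for its circumcenter E, the open segments AC and BD intersect (convexity), and dist A B + dist C D = dist B C + dist D A (the Pitot condition). Assume each of the triples (A,B,E), (B,C,E), (C,D,E), (D,A,E) is affinely independent. Let F', G', H', I' be the incenters of the radial triangles ABE, BCE, CDE, DAE, and set F = E + 3 • (F' - E), G = E + 3 • (G' - E), H = E + 3 • (H' - E), I = E + 3 • (I' - E) (the images of the incenters under the dilation of ratio 3 centered at E; these are the X₁₆₅-points of the radial triangles). Then F, G, H, I are concyclic. -/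

import Mathlib

/-!
Place the origin at the circumcentre `E` and scale to `r = 1`. With `p = |ab|`, the point of the
radial triangle of `a, b` is three times `(a + b) / (2 + p)`, whose squared norm is
`(2 - p) / (2 + p)` because `|a + b|² = 4 - p²`. It therefore lies on the circle with centre `o` and
squared radius `k + |o|²` iff `2 ⟨o, a + b⟩ + k (2 + p) = 2 - p`, which is linear in `(o, k)`. By
Pitot's condition the four equations attached to the four sides satisfy the same alternating
relation on both sides, so three of them suffice, and they form a square linear system.

The remaining point is that this system has trivial kernel. A kernel vector with `k = 0` is
orthogonal to both diagonals, hence zero. Otherwise it gives a linear form `n` with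
`⟨n, a + b⟩ = 2 + |ab|` and likewise for the other sides (`no_polar`). If the centre is inside the
quadrilateral, `n ∧ (b - a)` is positive for every side, while the sides sum to zero
(`no_polar_of_pos`). If it is beyond the side `ab`, then `ab` is longer than both neighbouring sides,
so `n` is nonnegative on `a - c` and `b - d`; the direction `-(a + b)` pointing out of `ab` is a
nonnegative combination of these, contradicting `⟨n, a + b⟩ > 0` (`no_polar_of_outside`).
-/

open scoped RealInnerProductSpace

/-- The incenter of the triangle with vertices `P`, `Q`, `R`: the weighted
average of the vertices with weights the lengths of the opposite sides. -/
noncomputable def triangleIncenter (P Q R : EuclideanSpace ℝ (Fin 2)) :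
    EuclideanSpace ℝ (Fin 2) :=
  (dist Q R / (dist Q R + dist P R + dist P Q)) • P +
    (dist P R / (dist Q R + dist P R + dist P Q)) • Q +
    (dist P Q / (dist Q R + dist P R + dist P Q)) • R

/-! ### Identities for points on the unit circle -/

/-- For a chord `ab` of the unit circle and a third point `c` on it, the angle at `c` has the sign
of `a ∧ b` relative to the orientation of `abc` (inscribed angle theorem). -/
lemma inscribed_angle_identity {a1 a2 b1 b2 c1 c2 : ℝ} (ha : a1 ^ 2 + a2 ^ 2 = 1)
    (hb : b1 ^ 2 + b2 ^ 2 = 1) (hc : c1 ^ 2 + c2 ^ 2 = 1) :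
    ((a1 - b1) ^ 2 + (a2 - b2) ^ 2) * ((a1 - c1) * (b1 - c1) + (a2 - c2) * (b2 - c2)) =
      2 * (a1 * b2 - a2 * b1) * ((b1 - a1) * (c2 - a2) - (b2 - a2) * (c1 - a1)) := by
  grind

/-- On the unit circle `a + b` is orthogonal to `a - b`; here in the form
`|a - b|² (a + b) ∧ v = 2 (a ∧ b) ⟨b - a, v⟩`, with `v = b - d`. -/
lemma sum_wedge_identity {a1 a2 b1 b2 : ℝ} (d1 d2 : ℝ) (ha : a1 ^ 2 + a2 ^ 2 = 1)
    (hb : b1 ^ 2 + b2 ^ 2 = 1) :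
    ((a1 - b1) ^ 2 + (a2 - b2) ^ 2) * ((a1 + b1) * (b2 - d2) - (a2 + b2) * (b1 - d1)) =
      2 * (a1 * b2 - a2 * b1) * ((a1 - b1) * (d1 - b1) + (a2 - b2) * (d2 - b2)) := by
  grind

/-- The orthogonality of `a + b` and `b - a`, in the form
`|a - b|² ⟨n, a + b⟩ = 2 (a ∧ b) (n ∧ (b - a))`. -/
lemma sum_inner_identity {a1 a2 b1 b2 : ℝ} (n1 n2 : ℝ) (ha : a1 ^ 2 + a2 ^ 2 = 1)
    (hb : b1 ^ 2 + b2 ^ 2 = 1) :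
    ((a1 - b1) ^ 2 + (a2 - b2) ^ 2) * (n1 * (a1 + b1) + n2 * (a2 + b2)) =
      2 * (a1 * b2 - a2 * b1) * (n1 * (b2 - a2) - n2 * (b1 - a1)) := by
  grind

/-- The formula `4 R · area = product of the sides`, squared, for `R = 1`. -/
lemma area_identity {a1 a2 b1 b2 c1 c2 : ℝ} (ha : a1 ^ 2 + a2 ^ 2 = 1)
    (hb : b1 ^ 2 + b2 ^ 2 = 1) (hc : c1 ^ 2 + c2 ^ 2 = 1) :
    4 * ((b1 - a1) * (c2 - a2) - (b2 - a2) * (c1 - a1)) ^ 2 =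
      ((a1 - b1) ^ 2 + (a2 - b2) ^ 2) * ((b1 - c1) ^ 2 + (b2 - c2) ^ 2) *
        ((a1 - c1) ^ 2 + (a2 - c2) ^ 2) := by
  grind

lemma eq_and_eq_of_dist_sq_eq_zero {a1 a2 b1 b2 : ℝ} (h : (a1 - b1) ^ 2 + (a2 - b2) ^ 2 = 0) :
    a1 = b1 ∧ a2 = b2 := by
  have h1 : a1 - b1 = 0 := by nlinarith [sq_nonneg (a1 - b1), sq_nonneg (a2 - b2)]
  have h2 : a2 - b2 = 0 := by nlinarith [sq_nonneg (a1 - b1), sq_nonneg (a2 - b2)]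
  exact ⟨sub_eq_zero.1 h1, sub_eq_zero.1 h2⟩

lemma dist_sq_pos_of_wedge_ne_zero {a1 a2 b1 b2 : ℝ} (h : a1 * b2 - a2 * b1 ≠ 0) :
    0 < (a1 - b1) ^ 2 + (a2 - b2) ^ 2 := by
  refine lt_of_le_of_ne (by positivity) fun hc ↦ h ?_
  obtain ⟨rfl, rfl⟩ := eq_and_eq_of_dist_sq_eq_zero hc.symm
  ring

/-! ### The linear system for the centre has trivial kernel -/

/-- The centre of the circle lies strictly beyond the side `ab`. Then `ab` is longer than `bc` and
`da`, and `-(a + b)` is a nonnegative combination of `a - c` and `b - d`, along which the linear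
form `n` does not decrease; so `⟨n, a + b⟩ ≤ 0`. -/
lemma no_polar_of_outside {a1 a2 b1 b2 c1 c2 d1 d2 p q t n1 n2 : ℝ}
    (ha : a1 ^ 2 + a2 ^ 2 = 1) (hb : b1 ^ 2 + b2 ^ 2 = 1)
    (hc : c1 ^ 2 + c2 ^ 2 = 1) (hd : d1 ^ 2 + d2 ^ 2 = 1)
    (hp0 : 0 < p)
    (hp : p ^ 2 = (a1 - b1) ^ 2 + (a2 - b2) ^ 2) (hq : q ^ 2 = (b1 - c1) ^ 2 + (b2 - c2) ^ 2)
    (ht : t ^ 2 = (d1 - a1) ^ 2 + (d2 - a2) ^ 2)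
    (hX : 0 < (c1 - a1) * (d2 - b2) - (c2 - a2) * (d1 - b1))
    (hABC : 0 < (b1 - a1) * (c2 - a2) - (b2 - a2) * (c1 - a1))
    (hABD : 0 < (b1 - a1) * (d2 - a2) - (b2 - a2) * (d1 - a1))
    (hAB : a1 * b2 - a2 * b1 < 0)
    (h1 : n1 * (a1 + b1) + n2 * (a2 + b2) = 2 + p)
    (h2 : n1 * (b1 + c1) + n2 * (b2 + c2) = 2 + q)
    (h4 : n1 * (d1 + a1) + n2 * (d2 + a2) = 2 + t) : False := by
  have hp2 : 0 < p ^ 2 := by positivity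
  have eC := inscribed_angle_identity ha hb hc
  have eD := inscribed_angle_identity ha hb hd
  have eB := sum_wedge_identity d1 d2 ha hb
  have eA := sum_wedge_identity c1 c2 hb ha
  have hp' : p ^ 2 = (b1 - a1) ^ 2 + (b2 - a2) ^ 2 := by rw [hp]; ring
  rw [← hp] at eC eD eB
  rw [← hp'] at eA
  -- the angles at `c` and `d` over the chord `ab` are obtuse
  have obC : (a1 - c1) * (b1 - c1) + (a2 - c2) * (b2 - c2) < 0 := by
    have := mul_neg_of_neg_of_pos hAB hABC
    by_contra hcon
    linarith [mul_nonneg hp2.le (not_lt.1 hcon)]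
  have obD : (a1 - d1) * (b1 - d1) + (a2 - d2) * (b2 - d2) < 0 := by
    have := mul_neg_of_neg_of_pos hAB hABD
    by_contra hcon
    linarith [mul_nonneg hp2.le (not_lt.1 hcon)]
  have hpq : q ≤ p := by
    apply le_of_sq_le_sq _ hp0.le
    linarith [sq_nonneg (a1 - c1), sq_nonneg (a2 - c2)]
  have hpt : t ≤ p := by
    apply le_of_sq_le_sq _ hp0.le
    linarith [sq_nonneg (b1 - d1), sq_nonneg (b2 - d2)]
  have acB : 0 ≤ (a1 - b1) * (d1 - b1) + (a2 - b2) * (d2 - b2) := by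
    linarith [sq_nonneg (b1 - d1), sq_nonneg (b2 - d2)]
  have acA : 0 ≤ (b1 - a1) * (c1 - a1) + (b2 - a2) * (c2 - a2) := by
    linarith [sq_nonneg (a1 - c1), sq_nonneg (a2 - c2)]
  have hlam : (a1 + b1) * (b2 - d2) - (a2 + b2) * (b1 - d1) ≤ 0 := by
    have := mul_nonneg (neg_nonneg.2 hAB.le) acB
    by_contra hcon
    linarith [mul_pos hp2 (not_le.1 hcon)]
  have hmu : 0 ≤ (b1 + a1) * (a2 - c2) - (b2 + a2) * (a1 - c1) := by
    have := mul_nonneg (neg_nonneg.2 hAB.le) acA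
    by_contra hcon
    linarith [mul_pos hp2 (neg_pos.2 (not_le.1 hcon))]
  have key : ((c1 - a1) * (d2 - b2) - (c2 - a2) * (d1 - b1)) * (2 + p) =
      ((a1 + b1) * (b2 - d2) - (a2 + b2) * (b1 - d1)) * (p - q) -
        ((b1 + a1) * (a2 - c2) - (b2 + a2) * (a1 - c1)) * (p - t) := by
    have e1 : p - q = n1 * (a1 - c1) + n2 * (a2 - c2) := by linarith
    have e2 : p - t = n1 * (b1 - d1) + n2 * (b2 - d2) := by linarith
    rw [e1, e2, ← h1]
    ring
  linarith [mul_pos hX (by linarith : 0 < 2 + p),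
    mul_nonneg (neg_nonneg.2 hlam) (sub_nonneg.2 hpq), mul_nonneg hmu (sub_nonneg.2 hpt)]

/-- No linear form `n` takes the values `2 + |ab|`, … on the sums of consecutive vertices of a
positively oriented convex quadrilateral inscribed in the unit circle. -/
lemma no_polar_of_pos {a1 a2 b1 b2 c1 c2 d1 d2 p q s t n1 n2 : ℝ}
    (ha : a1 ^ 2 + a2 ^ 2 = 1) (hb : b1 ^ 2 + b2 ^ 2 = 1)
    (hc : c1 ^ 2 + c2 ^ 2 = 1) (hd : d1 ^ 2 + d2 ^ 2 = 1)
    (hp0 : 0 < p) (hq0 : 0 < q) (hs0 : 0 < s) (ht0 : 0 < t)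
    (hp : p ^ 2 = (a1 - b1) ^ 2 + (a2 - b2) ^ 2) (hq : q ^ 2 = (b1 - c1) ^ 2 + (b2 - c2) ^ 2)
    (hs : s ^ 2 = (c1 - d1) ^ 2 + (c2 - d2) ^ 2) (ht : t ^ 2 = (d1 - a1) ^ 2 + (d2 - a2) ^ 2)
    (hX : 0 < (c1 - a1) * (d2 - b2) - (c2 - a2) * (d1 - b1))
    (hABC : 0 < (b1 - a1) * (c2 - a2) - (b2 - a2) * (c1 - a1))
    (hBCD : 0 < (c1 - b1) * (d2 - b2) - (c2 - b2) * (d1 - b1))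
    (hCDA : 0 < (d1 - c1) * (a2 - c2) - (d2 - c2) * (a1 - c1))
    (hDAB : 0 < (a1 - d1) * (b2 - d2) - (a2 - d2) * (b1 - d1))
    (hAB : a1 * b2 - a2 * b1 ≠ 0) (hBC : b1 * c2 - b2 * c1 ≠ 0)
    (hCD : c1 * d2 - c2 * d1 ≠ 0) (hDA : d1 * a2 - d2 * a1 ≠ 0)
    (h1 : n1 * (a1 + b1) + n2 * (a2 + b2) = 2 + p)
    (h2 : n1 * (b1 + c1) + n2 * (b2 + c2) = 2 + q)
    (h3 : n1 * (c1 + d1) + n2 * (c2 + d2) = 2 + s)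
    (h4 : n1 * (d1 + a1) + n2 * (d2 + a2) = 2 + t) : False := by
  rcases lt_or_gt_of_ne hAB with hAB | hAB
  · exact no_polar_of_outside ha hb hc hd hp0 hp hq ht hX hABC (by linarith) hAB h1 h2 h4
  rcases lt_or_gt_of_ne hBC with hBC | hBC
  · exact no_polar_of_outside hb hc hd ha hq0 hq hs hp (by linarith) hBCD (by linarith)
      hBC h2 h3 h1
  rcases lt_or_gt_of_ne hCD with hCD | hCD
  · exact no_polar_of_outside hc hd ha hb hs0 hs ht hq (by linarith) hCDA (by linarith)
      hCD h3 h4 h2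
  rcases lt_or_gt_of_ne hDA with hDA | hDA
  · exact no_polar_of_outside hd ha hb hc ht0 ht hp hs (by linarith) hDAB (by linarith)
      hDA h4 h1 h3
  -- the centre is interior: `n ∧ (b - a)` and its cyclic analogues are positive with sum zero
  have pos : ∀ {x1 x2 y1 y2 l : ℝ}, x1 ^ 2 + x2 ^ 2 = 1 → y1 ^ 2 + y2 ^ 2 = 1 → 0 < l →
      l ^ 2 = (x1 - y1) ^ 2 + (x2 - y2) ^ 2 → 0 < x1 * y2 - x2 * y1 →
      n1 * (x1 + y1) + n2 * (x2 + y2) = 2 + l → 0 < n1 * (y2 - x2) - n2 * (y1 - x1) := by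
    intro x1 x2 y1 y2 l hx hy hl0 hl hxy h
    have e := sum_inner_identity n1 n2 hx hy
    rw [← hl, h] at e
    have : 0 < l ^ 2 * (2 + l) := by positivity
    rw [e] at this
    exact pos_of_mul_pos_right this (by linarith)
  linarith [pos ha hb hp0 hp hAB h1, pos hb hc hq0 hq hBC h2, pos hc hd hs0 hs hCD h3,
    pos hd ha ht0 ht hDA h4]

/-- The open diagonals meet at parameters `x` and `y`, so the four vertex triangles have the
orientation of the pair of diagonals, which may be of either sign. -/
lemma no_polar {a1 a2 b1 b2 c1 c2 d1 d2 p q s t n1 n2 x y : ℝ}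
    (ha : a1 ^ 2 + a2 ^ 2 = 1) (hb : b1 ^ 2 + b2 ^ 2 = 1)
    (hc : c1 ^ 2 + c2 ^ 2 = 1) (hd : d1 ^ 2 + d2 ^ 2 = 1)
    (hp0 : 0 < p) (hq0 : 0 < q) (hs0 : 0 < s) (ht0 : 0 < t)
    (hp : p ^ 2 = (a1 - b1) ^ 2 + (a2 - b2) ^ 2) (hq : q ^ 2 = (b1 - c1) ^ 2 + (b2 - c2) ^ 2)
    (hs : s ^ 2 = (c1 - d1) ^ 2 + (c2 - d2) ^ 2) (ht : t ^ 2 = (d1 - a1) ^ 2 + (d2 - a2) ^ 2)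
    (hx0 : 0 < x) (hx1 : x < 1) (hy0 : 0 < y) (hy1 : y < 1)
    (e1 : a1 + x * (c1 - a1) = b1 + y * (d1 - b1))
    (e2 : a2 + x * (c2 - a2) = b2 + y * (d2 - b2))
    (hX : (c1 - a1) * (d2 - b2) - (c2 - a2) * (d1 - b1) ≠ 0)
    (hAB : a1 * b2 - a2 * b1 ≠ 0) (hBC : b1 * c2 - b2 * c1 ≠ 0)
    (hCD : c1 * d2 - c2 * d1 ≠ 0) (hDA : d1 * a2 - d2 * a1 ≠ 0)
    (h1 : n1 * (a1 + b1) + n2 * (a2 + b2) = 2 + p)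
    (h2 : n1 * (b1 + c1) + n2 * (b2 + c2) = 2 + q)
    (h3 : n1 * (c1 + d1) + n2 * (c2 + d2) = 2 + s)
    (h4 : n1 * (d1 + a1) + n2 * (d2 + a2) = 2 + t) : False := by
  have oABC : (b1 - a1) * (c2 - a2) - (b2 - a2) * (c1 - a1) =
      y * ((c1 - a1) * (d2 - b2) - (c2 - a2) * (d1 - b1)) := by grind
  have oBCD : (c1 - b1) * (d2 - b2) - (c2 - b2) * (d1 - b1) =
      (1 - x) * ((c1 - a1) * (d2 - b2) - (c2 - a2) * (d1 - b1)) := by grind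
  have oCDA : (d1 - c1) * (a2 - c2) - (d2 - c2) * (a1 - c1) =
      (1 - y) * ((c1 - a1) * (d2 - b2) - (c2 - a2) * (d1 - b1)) := by grind
  have oDAB : (a1 - d1) * (b2 - d2) - (a2 - d2) * (b1 - d1) =
      x * ((c1 - a1) * (d2 - b2) - (c2 - a2) * (d1 - b1)) := by grind
  have hx1' : 0 < 1 - x := by linarith
  have hy1' : 0 < 1 - y := by linarith
  rcases lt_or_gt_of_ne hX with hX | hX
  · -- the reflection `(u, v) ↦ (u, -v)` reverses the orientation
    have gABC := mul_neg_of_pos_of_neg hy0 hX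
    have gBCD := mul_neg_of_pos_of_neg hx1' hX
    have gCDA := mul_neg_of_pos_of_neg hy1' hX
    have gDAB := mul_neg_of_pos_of_neg hx0 hX
    refine no_polar_of_pos (a1 := a1) (a2 := -a2) (b1 := b1) (b2 := -b2) (c1 := c1) (c2 := -c2)
      (d1 := d1) (d2 := -d2) (n1 := n1) (n2 := -n2) (p := p) (q := q) (s := s) (t := t)
      (by linarith) (by linarith) (by linarith) (by linarith) hp0 hq0 hs0 ht0 (by linarith)
      (by linarith) (by linarith) (by linarith) (by linarith) (by linarith) (by linarith)
      (by linarith) (by linarith) ?_ ?_ ?_ ?_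
      (by linarith) (by linarith) (by linarith) (by linarith)
    · intro h; apply hAB; linarith
    · intro h; apply hBC; linarith
    · intro h; apply hCD; linarith
    · intro h; apply hDA; linarith
  · exact no_polar_of_pos ha hb hc hd hp0 hq0 hs0 ht0 hp hq hs ht hX
      (by rw [oABC]; positivity) (by rw [oBCD]; positivity) (by rw [oCDA]; positivity)
      (by rw [oDAB]; positivity) hAB hBC hCD hDA h1 h2 h3 h4

/-- The diagonals are not parallel: otherwise `a, b, c` are collinear and so are `b, c, d`, forcing
`a = c` and `b = d`, and then the common point of the diagonals is `a = b`. -/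
lemma diagonals_wedge_ne_zero {a1 a2 b1 b2 c1 c2 d1 d2 x y : ℝ}
    (ha : a1 ^ 2 + a2 ^ 2 = 1) (hb : b1 ^ 2 + b2 ^ 2 = 1)
    (hc : c1 ^ 2 + c2 ^ 2 = 1) (hd : d1 ^ 2 + d2 ^ 2 = 1)
    (e1 : a1 + x * (c1 - a1) = b1 + y * (d1 - b1))
    (e2 : a2 + x * (c2 - a2) = b2 + y * (d2 - b2))
    (hAB : a1 * b2 - a2 * b1 ≠ 0) (hBC : b1 * c2 - b2 * c1 ≠ 0)
    (hCD : c1 * d2 - c2 * d1 ≠ 0) :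
    (c1 - a1) * (d2 - b2) - (c2 - a2) * (d1 - b1) ≠ 0 := by
  intro hX
  have oABC : (b1 - a1) * (c2 - a2) - (b2 - a2) * (c1 - a1) = 0 := by
    have : (b1 - a1) * (c2 - a2) - (b2 - a2) * (c1 - a1) =
      y * ((c1 - a1) * (d2 - b2) - (c2 - a2) * (d1 - b1)) := by grind
    rw [this, hX, mul_zero]
  have oBCD : (c1 - b1) * (d2 - b2) - (c2 - b2) * (d1 - b1) = 0 := by
    have : (c1 - b1) * (d2 - b2) - (c2 - b2) * (d1 - b1) =
      (1 - x) * ((c1 - a1) * (d2 - b2) - (c2 - a2) * (d1 - b1)) := by grind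
    rw [this, hX, mul_zero]
  have pAB := dist_sq_pos_of_wedge_ne_zero hAB
  have pBC := dist_sq_pos_of_wedge_ne_zero hBC
  have pCD := dist_sq_pos_of_wedge_ne_zero hCD
  have k1 := area_identity ha hb hc
  have k2 := area_identity hb hc hd
  rw [oABC] at k1
  rw [oBCD] at k2
  have zAC : (a1 - c1) ^ 2 + (a2 - c2) ^ 2 = 0 := by
    have := (mul_pos pAB pBC).ne'
    simpa [this] using k1
  have zBD : (b1 - d1) ^ 2 + (b2 - d2) ^ 2 = 0 := by
    have := (mul_pos pBC pCD).ne'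
    simpa [this] using k2
  obtain ⟨rfl, rfl⟩ := eq_and_eq_of_dist_sq_eq_zero zAC
  obtain ⟨rfl, rfl⟩ := eq_and_eq_of_dist_sq_eq_zero zBD
  have g1 : a1 = b1 := by linarith
  have g2 : a2 = b2 := by linarith
  apply hAB
  rw [g1, g2]
  ring

/-- The centre `(o1, o2)` and the power `-k` of the origin: the point `(a + b) / (2 + |ab|)` has
squared norm `(2 - |ab|) / (2 + |ab|)`, so each of the four equations says that one of the four
points lies on the circle. -/
lemma exists_center {a1 a2 b1 b2 c1 c2 d1 d2 p q s t x y : ℝ}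
    (ha : a1 ^ 2 + a2 ^ 2 = 1) (hb : b1 ^ 2 + b2 ^ 2 = 1)
    (hc : c1 ^ 2 + c2 ^ 2 = 1) (hd : d1 ^ 2 + d2 ^ 2 = 1)
    (hp0 : 0 < p) (hq0 : 0 < q) (hs0 : 0 < s) (ht0 : 0 < t)
    (hp : p ^ 2 = (a1 - b1) ^ 2 + (a2 - b2) ^ 2) (hq : q ^ 2 = (b1 - c1) ^ 2 + (b2 - c2) ^ 2)
    (hs : s ^ 2 = (c1 - d1) ^ 2 + (c2 - d2) ^ 2) (ht : t ^ 2 = (d1 - a1) ^ 2 + (d2 - a2) ^ 2)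
    (hpitot : p + s = q + t)
    (hx0 : 0 < x) (hx1 : x < 1) (hy0 : 0 < y) (hy1 : y < 1)
    (e1 : a1 + x * (c1 - a1) = b1 + y * (d1 - b1))
    (e2 : a2 + x * (c2 - a2) = b2 + y * (d2 - b2))
    (hAB : a1 * b2 - a2 * b1 ≠ 0) (hBC : b1 * c2 - b2 * c1 ≠ 0)
    (hCD : c1 * d2 - c2 * d1 ≠ 0) (hDA : d1 * a2 - d2 * a1 ≠ 0) :
    ∃ o1 o2 k : ℝ,
      2 * (o1 * (a1 + b1) + o2 * (a2 + b2)) + k * (2 + p) = 2 - p ∧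
      2 * (o1 * (b1 + c1) + o2 * (b2 + c2)) + k * (2 + q) = 2 - q ∧
      2 * (o1 * (c1 + d1) + o2 * (c2 + d2)) + k * (2 + s) = 2 - s ∧
      2 * (o1 * (d1 + a1) + o2 * (d2 + a2)) + k * (2 + t) = 2 - t := by
  have hX := diagonals_wedge_ne_zero ha hb hc hd e1 e2 hAB hBC hCD
  let M : Matrix (Fin 3) (Fin 3) ℝ :=
    !![a1 + b1, a2 + b2, 2 + p; b1 + c1, b2 + c2, 2 + q; c1 + d1, c2 + d2, 2 + s]
  have hinj : Function.Injective M.mulVecLin := by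
    rw [← LinearMap.ker_eq_bot, LinearMap.ker_eq_bot']
    intro v hv
    have v1 : v 0 * (a1 + b1) + v 1 * (a2 + b2) + v 2 * (2 + p) = 0 := by
      have := congrFun hv 0
      simp [M, Matrix.mulVec, dotProduct, Fin.sum_univ_three] at this
      linarith
    have v2 : v 0 * (b1 + c1) + v 1 * (b2 + c2) + v 2 * (2 + q) = 0 := by
      have := congrFun hv 1
      simp [M, Matrix.mulVec, dotProduct, Fin.sum_univ_three] at this
      linarith
    have v3 : v 0 * (c1 + d1) + v 1 * (c2 + d2) + v 2 * (2 + s) = 0 := by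
      have := congrFun hv 2
      simp [M, Matrix.mulVec, dotProduct, Fin.sum_univ_three] at this
      linarith
    have v4 : v 0 * (d1 + a1) + v 1 * (d2 + a2) + v 2 * (2 + t) = 0 := by
      have : t = p + s - q := by linarith
      subst this
      linarith
    have w2 : v 2 = 0 := by
      by_contra h
      -- rescaled to `v 2 = -1`, the kernel vector is a linear form excluded by `no_polar`
      have scale : ∀ {u w l : ℝ}, v 0 * u + v 1 * w + v 2 * l = 0 →
          (-v 0 / v 2) * u + (-v 1 / v 2) * w = l := by
        intro u w l hl
        field_simp
        linarith
      exact no_polar ha hb hc hd hp0 hq0 hs0 ht0 hp hq hs ht hx0 hx1 hy0 hy1 e1 e2 hX hAB hBC hCD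
        hDA (scale v1) (scale v2) (scale v3) (scale v4)
    rw [w2] at v1 v2 v3 v4
    -- `(v 0, v 1)` is orthogonal to both diagonals
    have z1 : v 0 * (c1 - a1) + v 1 * (c2 - a2) = 0 := by linarith
    have z2 : v 0 * (d1 - b1) + v 1 * (d2 - b2) = 0 := by linarith
    have w0 : v 0 = 0 := by
      have : v 0 * ((c1 - a1) * (d2 - b2) - (c2 - a2) * (d1 - b1)) = 0 := by
        linear_combination (d2 - b2) * z1 - (c2 - a2) * z2
      simpa [hX] using this
    have w1 : v 1 = 0 := by
      have : v 1 * ((c1 - a1) * (d2 - b2) - (c2 - a2) * (d1 - b1)) = 0 := by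
        linear_combination (c1 - a1) * z2 - (d1 - b1) * z1
      simpa [hX] using this
    ext i
    fin_cases i <;> simp [w0, w1, w2]
  obtain ⟨v, hv⟩ := LinearMap.injective_iff_surjective.1 hinj ![2 - p, 2 - q, 2 - s]
  have v1 := congrFun hv 0
  have v2 := congrFun hv 1
  have v3 := congrFun hv 2
  simp [M, Matrix.mulVec, dotProduct, Fin.sum_univ_three] at v1 v2 v3
  refine ⟨v 0 / 2, v 1 / 2, v 2, by linarith, by linarith, by linarith, ?_⟩
  have : t = p + s - q := by linarith
  subst this
  linarith

/-! ### Passage to normalized coordinates -/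

lemma dist_sq_coord (P Q : EuclideanSpace ℝ (Fin 2)) :
    dist P Q ^ 2 = (P 0 - Q 0) ^ 2 + (P 1 - Q 1) ^ 2 := by
  rw [EuclideanSpace.dist_eq, Real.sq_sqrt (by positivity)]
  simp [Fin.sum_univ_two, Real.dist_eq, sq_abs]

lemma unit_coord {E A : EuclideanSpace ℝ (Fin 2)} {r : ℝ} (hr : 0 < r) (h : dist E A = r) :
    ((A 0 - E 0) / r) ^ 2 + ((A 1 - E 1) / r) ^ 2 = 1 := by
  have := dist_sq_coord E A
  rw [h] at this
  field_simp
  linarith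

lemma dist_coord (E A B : EuclideanSpace ℝ (Fin 2)) {r : ℝ} (hr : 0 < r) :
    (dist A B / r) ^ 2 = ((A 0 - E 0) / r - (B 0 - E 0) / r) ^ 2 +
      ((A 1 - E 1) / r - (B 1 - E 1) / r) ^ 2 := by
  have := dist_sq_coord A B
  field_simp
  linarith

lemma wedge_coord_ne_zero {E A B : EuclideanSpace ℝ (Fin 2)} {r : ℝ} (hr : 0 < r)
    (hA : dist E A = r) (h : AffineIndependent ℝ ![A, B, E]) :
    (A 0 - E 0) / r * ((B 1 - E 1) / r) - (A 1 - E 1) / r * ((B 0 - E 0) / r) ≠ 0 := by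
  intro h0
  rw [affineIndependent_iff_not_collinear_set] at h
  apply h
  have hw : (A 0 - E 0) * (B 1 - E 1) - (A 1 - E 1) * (B 0 - E 0) = 0 := by
    field_simp at h0
    linarith
  have hA2 := dist_sq_coord E A
  rw [hA] at hA2
  rw [collinear_iff_of_mem (p₀ := E) (by simp)]
  refine ⟨A - E, ?_⟩
  -- `B - E` is its own orthogonal projection onto the line spanned by `A - E`
  simp only [Set.mem_insert_iff, Set.mem_singleton_iff, forall_eq_or_imp, forall_eq]
  refine ⟨⟨1, by simp⟩,
    ⟨((A 0 - E 0) * (B 0 - E 0) + (A 1 - E 1) * (B 1 - E 1)) / r ^ 2, ?_⟩, ⟨0, by simp⟩⟩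
  ext i
  fin_cases i
  · simp
    field_simp
    linear_combination (B 0 - E 0) * hA2 - (A 1 - E 1) * hw
  · simp
    field_simp
    linear_combination (B 1 - E 1) * hA2 + (A 0 - E 0) * hw

/-- The image of the incenter lies on the circle with centre `3 (o1, o2)` and squared radius
`9 (k + o1² + o2²)` in the coordinates centred at `E` with unit `r`. -/
lemma dist_center_sq {E A B : EuclideanSpace ℝ (Fin 2)} {r o1 o2 k : ℝ} (hr : 0 < r)
    (hA : dist E A = r) (hB : dist E B = r)
    (h : 2 * (o1 * ((A 0 - E 0) / r + (B 0 - E 0) / r) + o2 * ((A 1 - E 1) / r + (B 1 - E 1) / r)) +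
      k * (2 + dist A B / r) = 2 - dist A B / r) :
    dist (E + (3 : ℝ) • (triangleIncenter A B E - E))
      !₂[E 0 + 3 * r * o1, E 1 + 3 * r * o2] ^ 2 = 9 * r ^ 2 * (k + o1 ^ 2 + o2 ^ 2) := by
  have ha := unit_coord hr hA
  have hb := unit_coord hr hB
  have hp := dist_coord E A B hr
  rw [dist_sq_coord]
  simp only [triangleIncenter, dist_comm B E, dist_comm A E, hA, hB]
  have hp0 : 0 ≤ dist A B / r := by positivity
  obtain ⟨p, hpd⟩ : ∃ p, p = dist A B / r := ⟨_, rfl⟩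
  obtain ⟨a1, ha1⟩ : ∃ x, x = (A 0 - E 0) / r := ⟨_, rfl⟩
  obtain ⟨a2, ha2⟩ : ∃ x, x = (A 1 - E 1) / r := ⟨_, rfl⟩
  obtain ⟨b1, hb1⟩ : ∃ x, x = (B 0 - E 0) / r := ⟨_, rfl⟩
  obtain ⟨b2, hb2⟩ : ∃ x, x = (B 1 - E 1) / r := ⟨_, rfl⟩
  rw [← ha1, ← ha2] at ha
  rw [← hb1, ← hb2] at hb
  rw [← hpd, ← ha1, ← ha2, ← hb1, ← hb2] at hp
  rw [← hpd] at hp0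
  rw [← hpd, ← ha1, ← ha2, ← hb1, ← hb2] at h
  have hpd' : dist A B = r * p := by rw [hpd]; field_simp
  have ha1' : A 0 = E 0 + r * a1 := by rw [ha1]; field_simp; ring
  have ha2' : A 1 = E 1 + r * a2 := by rw [ha2]; field_simp; ring
  have hb1' : B 0 = E 0 + r * b1 := by rw [hb1]; field_simp; ring
  have hb2' : B 1 = E 1 + r * b2 := by rw [hb2]; field_simp; ring
  have h2p : 2 + p ≠ 0 := by positivity
  have hden : r + r + r * p = r * (2 + p) := by ring
  simp [hpd', ha1', ha2', hb1', hb2', hden]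
  have x1 : ∀ e u v o : ℝ, 3 * (r / (r * (2 + p)) * (e + r * u) +
      r / (r * (2 + p)) * (e + r * v) + r * p / (r * (2 + p)) * e - e) - 3 * r * o =
        3 * r * ((u + v) / (2 + p) - o) := by
    intro e u v o
    field_simp
    ring
  rw [x1, x1]
  have hsum : (a1 + b1) ^ 2 + (a2 + b2) ^ 2 = (2 - p) * (2 + p) := by linarith
  have hsq : ((a1 + b1) / (2 + p)) ^ 2 + ((a2 + b2) / (2 + p)) ^ 2 = (2 - p) / (2 + p) := by
    field_simp
    linarith
  have hlin : 2 * (o1 * ((a1 + b1) / (2 + p)) + o2 * ((a2 + b2) / (2 + p))) + k =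
      (2 - p) / (2 + p) := by
    field_simp
    linarith
  linear_combination 9 * r ^ 2 * (hsq - hlin)

/-- If `E` is the circumcenter (Steiner point) of a bicentric quadrilateral
`ABCD`, then the images `F`, `G`, `H`, `I` of the incenters of the radial
triangles `ABE`, `BCE`, `CDE`, `DAE` under the dilation of ratio `3` centered
at `E` (the `X₁₆₅`-points of the radial triangles) are concyclic. -/
theorem X165_central_quadrilateral_of_bicentric_concyclic
    (A B C D E F G H I : EuclideanSpace ℝ (Fin 2)) (r : ℝ) (hr : 0 < r)
    (hEA : dist E A = r) (hEB : dist E B = r) (hEC : dist E C = r)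
    (hED : dist E D = r)
    (hconv : ∃ P : EuclideanSpace ℝ (Fin 2),
      P ∈ openSegment ℝ A C ∧ P ∈ openSegment ℝ B D)
    (hpitot : dist A B + dist C D = dist B C + dist D A)
    (hABE : AffineIndependent ℝ ![A, B, E])
    (hBCE : AffineIndependent ℝ ![B, C, E])
    (hCDE : AffineIndependent ℝ ![C, D, E])
    (hDAE : AffineIndependent ℝ ![D, A, E])
    (hF : F = E + (3 : ℝ) • (triangleIncenter A B E - E))
    (hG : G = E + (3 : ℝ) • (triangleIncenter B C E - E))
    (hH : H = E + (3 : ℝ) • (triangleIncenter C D E - E))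
    (hI : I = E + (3 : ℝ) • (triangleIncenter D A E - E)) :
    EuclideanGeometry.Concyclic ({F, G, H, I} : Set (EuclideanSpace ℝ (Fin 2))) := by
  have hP : ∃ x y : ℝ, 0 < x ∧ x < 1 ∧ 0 < y ∧ y < 1 ∧
      ∀ i, A i + x * (C i - A i) = B i + y * (D i - B i) := by
    obtain ⟨P, hP1, hP2⟩ := hconv
    rw [openSegment_eq_image'] at hP1 hP2
    obtain ⟨x, hx, hxP⟩ := hP1
    obtain ⟨y, hy, hyP⟩ := hP2
    refine ⟨x, y, hx.1, hx.2, hy.1, hy.2, fun i ↦ ?_⟩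
    have := congrArg (fun Q : EuclideanSpace ℝ (Fin 2) ↦ Q i) (hxP.trans hyP.symm)
    simpa using this
  obtain ⟨x, y, hx0, hx1, hy0, hy1, hxy⟩ := hP
  have norm : ∀ i, (A i - E i) / r + x * ((C i - E i) / r - (A i - E i) / r) =
      (B i - E i) / r + y * ((D i - E i) / r - (B i - E i) / r) := by
    intro i
    have := hxy i
    field_simp
    linarith
  have wAB := wedge_coord_ne_zero hr hEA hABE
  have wBC := wedge_coord_ne_zero hr hEB hBCE
  have wCD := wedge_coord_ne_zero hr hEC hCDE
  have wDA := wedge_coord_ne_zero hr hED hDAE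
  have pos : ∀ {P Q : EuclideanSpace ℝ (Fin 2)}, AffineIndependent ℝ ![P, Q, E] →
      0 < dist P Q / r := by
    intro P Q h
    have : P ≠ Q := h.injective.ne (show (0 : Fin 3) ≠ 1 by decide)
    have := dist_pos.2 this
    positivity
  obtain ⟨o1, o2, k, h1, h2, h3, h4⟩ := exists_center (unit_coord hr hEA) (unit_coord hr hEB)
    (unit_coord hr hEC) (unit_coord hr hED) (pos hABE) (pos hBCE) (pos hCDE) (pos hDAE)
    (dist_coord E A B hr) (dist_coord E B C hr) (dist_coord E C D hr) (dist_coord E D A hr)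
    (by rw [← add_div, ← add_div, hpitot]) hx0 hx1 hy0 hy1 (norm 0) (norm 1) wAB wBC wCD wDA
  refine ⟨⟨!₂[E 0 + 3 * r * o1, E 1 + 3 * r * o2], √(9 * r ^ 2 * (k + o1 ^ 2 + o2 ^ 2)), ?_⟩,
    coplanar_of_finrank_eq_two _ (by simp)⟩
  simp only [Set.mem_insert_iff, Set.mem_singleton_iff, forall_eq_or_imp, forall_eq]
  rw [hF, hG, hH, hI, ← dist_center_sq hr hEA hEB h1]
  refine ⟨(Real.sqrt_sq dist_nonneg).symm, ?_, ?_, ?_⟩ <;> rw [dist_center_sq hr hEA hEB h1]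
  · rw [← dist_center_sq hr hEB hEC h2, Real.sqrt_sq dist_nonneg]
  · rw [← dist_center_sq hr hEC hED h3, Real.sqrt_sq dist_nonneg]
  · rw [← dist_center_sq hr hED hEA h4, Real.sqrt_sq dist_nonneg]
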